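/- (Additive expansion implies multiplicative expansion.) Fix a label i, q ≥ 0 and δ > 0. Suppose P(·|S_i) satisfies (q,δ)-additive expansion on S_i^bad: for every U ⊆ S_i^bad with P(U | S_i) > q, it holds that P(N(U) \ S_i^bad | S_i) ≥ P(U | S_i) + δ. Then for every U ⊆ S_i^bad with P(U | S_i^bad) > q/α_i, P(N(U) | S_i^good) > (α_i/(1 − α_i))·P(U | S_i^bad); that is, the distribution satisfies (c, q/α_i)-expansion on the pair (S_i^good, S_i^bad) with c = α_i/(1 − α_i) (and the inequality is strict). -/

import Mathlib

open Finset
open scoped Classical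

noncomputable section

variable {X Y : Type*} [Fintype X] [DecidableEq X] [DecidableEq Y]

/-- Probability of a finite set of points under the weight function `μ`. -/
def Pw (μ : X → ℝ) (A : Finset X) : ℝ := ∑ x ∈ A, μ x

/-- Conditional probability `P(A | B) = P(A ∩ B) / P(B)`. -/
def cPw (μ : X → ℝ) (A B : Finset X) : ℝ := Pw μ (A ∩ B) / Pw μ B

/-- `err(f, g | U) = P({x : f x ≠ g x} | U)`. -/
def errP {Z : Type*} (μ : X → ℝ) (f g : X → Z) (U : Finset X) : ℝ :=
  cPw μ (univ.filter fun x => f x ≠ g x) U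

/-- Neighborhood of a set: `N(A) = ⋃_{x ∈ A} N(x)`. -/
def nbhd (N : X → Finset X) (A : Finset X) : Finset X := A.biUnion N

/-- `r(f, x) = P({x' : f x' ≠ f x} | N(x))`. -/
def rob (μ : X → ℝ) (N : X → Finset X) (f : X → Y) (x : X) : ℝ :=
  cPw μ (univ.filter fun x' => f x' ≠ f x) (N x)

/-- `R_η(f) = {x : r(f,x) ≤ η}`, the set of η-robust points of `f`. -/
def Rset (μ : X → ℝ) (N : X → Finset X) (η : ℝ) (f : X → Y) : Finset X :=
  univ.filter fun x => rob μ N f x ≤ η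

/-- Edge weight `w(x, x') = P({x})·P({x'})·1[x ∈ N(x')]`. -/
def wE (μ : X → ℝ) (N : X → Finset X) (x x' : X) : ℝ :=
  μ x * μ x' * (if x ∈ N x' then 1 else 0)

/-- `w(V, U) = Σ_{x ∈ V, x' ∈ U} w(x, x')`. -/
def wS (μ : X → ℝ) (N : X → Finset X) (V U : Finset X) : ℝ :=
  ∑ x ∈ V, ∑ x' ∈ U, wE μ N x x'

/-- `P_{1-η}(U, A)`: the η-robust neighborhood size of `U` in `A`. -/
def robNbhdSize (μ : X → ℝ) (N : X → Finset X) (η : ℝ) (U A : Finset X) : ℝ :=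
  sInf {p : ℝ | ∃ V : Finset X,
    (1 - η) * wS μ N (nbhd N U) U ≤ wS μ N V U ∧ p = cPw μ V A}

/-- `M` satisfies `(c, q, η)`-robust expansion on `(A, B)`. -/
def RobustExpansion (μ : X → ℝ) (N : X → Finset X) (c q η : ℝ)
    (M : Set (Finset X)) (A B : Finset X) : Prop :=
  ∀ U ∈ M, cPw μ U B > q → robNbhdSize μ N η U A > c * cPw μ U B

/-- `M` satisfies `(c, q)`-expansion on `(A, B)` (the `η = 0` case). -/
def Expansion (μ : X → ℝ) (N : X → Finset X) (c q : ℝ)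
    (M : Set (Finset X)) (A B : Finset X) : Prop :=
  ∀ U ∈ M, cPw μ U B > q → cPw μ (nbhd N U) A > c * cPw μ U B

/-- Covered set `S = {x : ỹ x ≠ ∅}`. -/
def Scov (yt : X → Option Y) : Finset X := univ.filter fun x => yt x ≠ none

/-- `S_i = S ∩ X_i`. -/
def SiSet (y : X → Y) (yt : X → Option Y) (i : Y) : Finset X :=
  univ.filter fun x => yt x ≠ none ∧ y x = i

/-- `T_i = T ∩ X_i`. -/
def TiSet (y : X → Y) (yt : X → Option Y) (i : Y) : Finset X :=
  univ.filter fun x => yt x = none ∧ y x = i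

/-- `S_i^good = {x ∈ S_i : ỹ x = y x}`. -/
def SiGood (y : X → Y) (yt : X → Option Y) (i : Y) : Finset X :=
  univ.filter fun x => yt x = some (y x) ∧ y x = i

/-- `S_i^bad = S_i \ S_i^good`. -/
def SiBad (y : X → Y) (yt : X → Option Y) (i : Y) : Finset X :=
  SiSet y yt i \ SiGood y yt i

/-- `α_i = P(S_i^bad | S_i)`. -/
def alphaW (μ : X → ℝ) (y : X → Y) (yt : X → Option Y) (i : Y) : ℝ :=
  cPw μ (SiBad y yt i) (SiSet y yt i)

/-- `M_η(B, F) = {R_η(f) ∩ U(B,f) : f ∈ F}`, the η-robust mistake sets on `B`. -/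
def MFam (μ : X → ℝ) (N : X → Finset X) (η : ℝ) (y : X → Y)
    (B : Finset X) (F : Set (X → Y)) : Set (Finset X) :=
  {A | ∃ f ∈ F, A = Rset μ N η f ∩ (B.filter fun x => f x ≠ y x)}

/-- `M'_η(B, F) = {R_η(f) ∩ (B \ U(B,f)) : f ∈ F}`, the η-robust non-mistake sets on `B`. -/
def MFam' (μ : X → ℝ) (N : X → Finset X) (η : ℝ) (y : X → Y)
    (B : Finset X) (F : Set (X → Y)) : Set (Finset X) :=
  {A | ∃ f ∈ F, A = Rset μ N η f ∩ (B.filter fun x => f x = y x)}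

/-!
Let `G ⊆ S`, `B = S \ G` and `α = P(B | S)`. For `U ⊆ B` the chain rule gives
`P(U | B) = P(U | S) / α` and `P(N(U) | G) = P(N(U) \ B | S) / (1 - α)`. Hence `P(U | B) > q / α`
says that `P(U | S) > q`, and dividing `P(N(U) \ B | S) > P(U | S)` by `1 - α` gives the claim.
-/

section ConditionalProbability

omit [Fintype X]

variable {μ : X → ℝ}

omit [DecidableEq X] in
theorem Pw_nonneg (hμ : ∀ x, 0 ≤ μ x) (A : Finset X) : 0 ≤ Pw μ A :=
  sum_nonneg fun x _ => hμ x

theorem cPw_nonneg (hμ : ∀ x, 0 ≤ μ x) (A B : Finset X) : 0 ≤ cPw μ A B :=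
  div_nonneg (Pw_nonneg hμ _) (Pw_nonneg hμ _)

theorem cPw_mono_left {A B : Finset X} (hμ : ∀ x, 0 ≤ μ x) (hAB : A ⊆ B) (S : Finset X) :
    cPw μ A S ≤ cPw μ B S :=
  div_le_div_of_nonneg_right
    (sum_le_sum_of_subset_of_nonneg (inter_subset_inter_right hAB) fun x _ _ => hμ x)
    (Pw_nonneg hμ S)

theorem cPw_mul_cPw_of_subset {B S : Finset X} (hBS : B ⊆ S) (hB : cPw μ B S ≠ 0)
    (A : Finset X) :
    cPw μ A B * cPw μ B S = cPw μ (A ∩ B) S := by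
  have hPB : Pw μ B ≠ 0 := by
    rw [cPw, inter_eq_left.2 hBS] at hB
    exact (div_ne_zero_iff.1 hB).1
  rw [cPw, cPw, cPw, inter_eq_left.2 hBS, inter_eq_left.2 (inter_subset_right.trans hBS),
    div_mul_div_cancel₀ hPB]

theorem cPw_sdiff_add_cPw {G S : Finset X} (hGS : G ⊆ S) (hS : Pw μ S ≠ 0) :
    cPw μ (S \ G) S + cPw μ G S = 1 := by
  have hsum : Pw μ (S \ G) + Pw μ G = Pw μ S := sum_sdiff hGS
  rw [cPw, cPw, inter_eq_left.2 sdiff_subset, inter_eq_left.2 hGS, ← add_div, hsum, div_self hS]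

theorem cPw_sdiff_sdiff (A S G : Finset X) :
    cPw μ (A \ (S \ G)) S = cPw μ (A ∩ G) S := by
  have hinter : A \ (S \ G) ∩ S = A ∩ G ∩ S := by
    ext x
    simp only [mem_inter, mem_sdiff]
    tauto
  rw [cPw, cPw, hinter]

end ConditionalProbability

/-- `P(· | S)` satisfies `(q, δ)`-additive expansion on `B` for the sets of the family `M`; the
paper's notion is the case where `M` consists of all subsets of `B`. -/
def AdditiveExpansion (μ : X → ℝ) (N : X → Finset X) (q δ : ℝ)
    (M : Set (Finset X)) (S B : Finset X) : Prop :=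
  ∀ U ∈ M, cPw μ U S > q → cPw μ (nbhd N U \ B) S ≥ cPw μ U S + δ

omit [Fintype X] in
theorem additive_implies_multiplicative_expansion_general
    {μ : X → ℝ} {N : X → Finset X} {q δ : ℝ} {M : Set (Finset X)} {S G : Finset X}
    (hμ : ∀ x, 0 ≤ μ x) (hGS : G ⊆ S) (hM : ∀ U ∈ M, U ⊆ S \ G)
    (hα : 0 < cPw μ (S \ G) S) (hδ : 0 < δ) (hadd : AdditiveExpansion μ N q δ M S (S \ G)) :
    Expansion μ N (cPw μ (S \ G) S / (1 - cPw μ (S \ G) S)) (q / cPw μ (S \ G) S)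
      M G (S \ G) := by
  intro U hU hUq
  have hUB : cPw μ U (S \ G) * cPw μ (S \ G) S = cPw μ U S := by
    rw [cPw_mul_cPw_of_subset sdiff_subset hα.ne', inter_eq_left.2 (hM U hU)]
  have hUS : q < cPw μ U S := hUB ▸ (div_lt_iff₀ hα).1 hUq
  have hlt : cPw μ U S < cPw μ (nbhd N U ∩ G) S := by
    linarith [hadd U hU hUS, cPw_sdiff_sdiff (μ := μ) (nbhd N U) S G]
  -- Expansion out of `S \ G` already forces `G` to have positive mass.
  have hG : 0 < cPw μ G S :=
    (cPw_nonneg hμ U S).trans_lt (hlt.trans_le (cPw_mono_left hμ inter_subset_right S))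
  have hG_eq : 1 - cPw μ (S \ G) S = cPw μ G S :=
    sub_eq_of_eq_add' (cPw_sdiff_add_cPw hGS (div_ne_zero_iff.1 hG.ne').2).symm
  calc cPw μ (S \ G) S / (1 - cPw μ (S \ G) S) * cPw μ U (S \ G)
      = cPw μ U S / cPw μ G S := by rw [hG_eq, ← hUB]; ring
    _ < cPw μ (nbhd N U ∩ G) S / cPw μ G S := div_lt_div_of_pos_right hlt hG
    _ = cPw μ (nbhd N U) G := by
      rw [← cPw_mul_cPw_of_subset hGS hG.ne', mul_div_cancel_right₀ _ hG.ne']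

omit [DecidableEq X] in
theorem SiGood_subset_SiSet (y : X → Y) (yt : X → Option Y) (i : Y) :
    SiGood y yt i ⊆ SiSet y yt i :=
  monotone_filter_right _ fun _ _ ⟨hyt, hy⟩ => ⟨hyt ▸ Option.some_ne_none _, hy⟩

/-- Lemma `lemma:additive-implies-multiplicative`:
additive expansion implies multiplicative expansion. -/
theorem additive_implies_multiplicative_expansion
    (μ : X → ℝ) (N : X → Finset X) (y : X → Y) (yt : X → Option Y)
    (i : Y) (q δ : ℝ)
    (hμ : ∀ x, 0 ≤ μ x) (hμ1 : ∑ x, μ x = 1)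
    (hNsym : ∀ x x', x ∈ N x' ↔ x' ∈ N x)
    (hSi : 0 < Pw μ (SiSet y yt i))
    (hSg : 0 < Pw μ (SiGood y yt i))
    (hSb : 0 < Pw μ (SiBad y yt i))
    (hα0 : 0 < alphaW μ y yt i) (hα : alphaW μ y yt i < 1 / 2)
    (hq : 0 ≤ q) (hδ : 0 < δ)
    (hadd : ∀ U : Finset X, U ⊆ SiBad y yt i → cPw μ U (SiSet y yt i) > q →
      cPw μ (nbhd N U \ SiBad y yt i) (SiSet y yt i) ≥ cPw μ U (SiSet y yt i) + δ) :
    ∀ U : Finset X, U ⊆ SiBad y yt i →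
      cPw μ U (SiBad y yt i) > q / alphaW μ y yt i →
      cPw μ (nbhd N U) (SiGood y yt i) >
        alphaW μ y yt i / (1 - alphaW μ y yt i) * cPw μ U (SiBad y yt i) :=
  additive_implies_multiplicative_expansion_general (M := {U | U ⊆ SiBad y yt i}) hμ
    (SiGood_subset_SiSet y yt i) (fun _ hU => hU) hα0 hδ hadd
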